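/- Existence of an optimal coupling for the Fused Network Gromov–Wasserstein distance: given two network tuples g_X = (X, ψ_X, φ_X, ω_X, μ_X) and g_Y = (Y, ψ_Y, φ_Y, ω_Y, μ_Y), for any exponents p, q ∈ [1, ∞) and any trade-off parameters (α, β) ∈ [0,1]², there exists a coupling μ* ∈ Π(μ_X, μ_Y) such that FNGW_{α,β,q,p}(g_X, g_Y) = E_{α,β,q,p}(g_X, g_Y, μ*); that is, the infimum defining FNGW is attained. -/

import Mathlib

open MeasureTheory

/-- The set of couplings of two probability measures: Borel probability measures on the
product whose marginals are the given measures. -/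
def couplings {X Y : Type*} [MeasurableSpace X] [MeasurableSpace Y]
    (μX : Measure X) (μY : Measure Y) : Set (Measure (X × Y)) :=
  {μ | IsProbabilityMeasure μ ∧ μ.map Prod.fst = μX ∧ μ.map Prod.snd = μY}

/-- The FNGW cost functional `E_{α,β,q,p}(g_X, g_Y, μ)`. -/
noncomputable def fngwCost {X Y Ψ Ω : Type*} [MeasurableSpace X] [MeasurableSpace Y]
    [MetricSpace Ψ] [MetricSpace Ω]
    (α β q p : ℝ)
    (ψX : X → Ψ) (φX : X × X → ℝ) (ωX : X × X → Ω)
    (ψY : Y → Ψ) (φY : Y × Y → ℝ) (ωY : Y × Y → Ω)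
    (μ : Measure (X × Y)) : ℝ :=
  (∫ w : (X × Y) × (X × Y),
      ((1 - α - β) * dist (ψX w.1.1) (ψY w.1.2) ^ q
        + α * dist (ωX (w.1.1, w.2.1)) (ωY (w.1.2, w.2.2)) ^ q
        + β * |φX (w.1.1, w.2.1) - φY (w.1.2, w.2.2)| ^ q) ^ p
      ∂(μ.prod μ)) ^ (1 / p)

/-- The Fused Network Gromov–Wasserstein distance: infimum of the cost over couplings. -/
noncomputable def FNGW {X Y Ψ Ω : Type*} [MeasurableSpace X] [MeasurableSpace Y]
    [MetricSpace Ψ] [MetricSpace Ω]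
    (α β q p : ℝ)
    (ψX : X → Ψ) (φX : X × X → ℝ) (ωX : X × X → Ω)
    (ψY : Y → Ψ) (φY : Y × Y → ℝ) (ωY : Y × Y → Ω)
    (μX : Measure X) (μY : Measure Y) : ℝ :=
  sInf ((fngwCost α β q p ψX φX ωX ψY φY ωY) '' couplings μX μY)

/-!
The proof is the direct method. Tightness of the marginals makes the couplings tight, so they form
a weakly compact set by Prokhorov's theorem. The cost involves `μ` only through the integral of a
bounded continuous function against `μ ⊗ μ`, and `μ ↦ μ ⊗ μ` is weakly continuous, so the cost is
weakly continuous and attains its minimum.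
-/

section Couplings

lemma prod_mem_couplings {X Y : Type*} [MeasurableSpace X] [MeasurableSpace Y]
    (μX : Measure X) (μY : Measure Y) [IsProbabilityMeasure μX] [IsProbabilityMeasure μY] :
    μX.prod μY ∈ couplings μX μY :=
  ⟨inferInstance, measurePreserving_fst.map_eq, measurePreserving_snd.map_eq⟩

variable {X Y : Type*} [MeasurableSpace X] [TopologicalSpace X]
  [MeasurableSpace Y] [TopologicalSpace Y] {μX : Measure X} {μY : Measure Y}

lemma isTightMeasureSet_couplings (hX : IsTightMeasureSet {μX}) (hY : IsTightMeasureSet {μY}) :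
    IsTightMeasureSet (couplings μX μY) := by
  refine IsTightMeasureSet.prodMk (hX.subset ?_) (hY.subset ?_)
  · rintro _ ⟨μ, hμ, rfl⟩
    exact hμ.2.1
  · rintro _ ⟨μ, hμ, rfl⟩
    exact hμ.2.2

variable [BorelSpace X] [BorelSpace Y] [SecondCountableTopologyEither X Y]
  [HasOuterApproxClosed X] [HasOuterApproxClosed Y]
  [IsProbabilityMeasure μX] [IsProbabilityMeasure μY]

lemma isClosed_setOf_mem_couplings :
    IsClosed {μ : ProbabilityMeasure (X × Y) | (μ : Measure (X × Y)) ∈ couplings μX μY} := by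
  let νX : ProbabilityMeasure X := ⟨μX, inferInstance⟩
  let νY : ProbabilityMeasure Y := ⟨μY, inferInstance⟩
  have marginals_eq :
      {μ : ProbabilityMeasure (X × Y) | (μ : Measure (X × Y)) ∈ couplings μX μY} =
        {μ | μ.map measurable_fst.aemeasurable = νX} ∩
          {μ | μ.map measurable_snd.aemeasurable = νY} := by
    ext μ
    exact ⟨fun h ↦ ⟨Subtype.ext h.2.1, Subtype.ext h.2.2⟩,
      fun h ↦ ⟨inferInstance, congrArg Subtype.val h.1, congrArg Subtype.val h.2⟩⟩
  rw [marginals_eq]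
  exact (isClosed_eq (ProbabilityMeasure.continuous_map continuous_fst) continuous_const).inter
    (isClosed_eq (ProbabilityMeasure.continuous_map continuous_snd) continuous_const)

variable [T2Space X] [T2Space Y]

lemma isCompact_setOf_mem_couplings
    (hX : IsTightMeasureSet {μX}) (hY : IsTightMeasureSet {μY}) :
    IsCompact {μ : ProbabilityMeasure (X × Y) | (μ : Measure (X × Y)) ∈ couplings μX μY} := by
  rw [← isClosed_setOf_mem_couplings.closure_eq]
  refine isCompact_closure_of_isTightMeasureSet ((isTightMeasureSet_couplings hX hY).subset ?_)
  rintro _ ⟨μ, hμ, rfl⟩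
  exact hμ

lemma exists_isLeast_image_couplings {R : Type*} [LinearOrder R] {J : Measure (X × Y) → R}
    (hX : IsTightMeasureSet {μX}) (hY : IsTightMeasureSet {μY})
    (hJ : LowerSemicontinuous fun μ : ProbabilityMeasure (X × Y) ↦ J μ) :
    ∃ μ ∈ couplings μX μY, IsLeast (J '' couplings μX μY) (J μ) := by
  obtain ⟨μ, hμ, hmin⟩ := (hJ.lowerSemicontinuousOn _).exists_isMinOn
    ⟨⟨μX.prod μY, inferInstance⟩, prod_mem_couplings μX μY⟩ (isCompact_setOf_mem_couplings hX hY)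
  refine ⟨μ, hμ, Set.mem_image_of_mem J hμ, ?_⟩
  rintro _ ⟨ν, hν, rfl⟩
  exact hmin (a := ⟨ν, hν.1⟩) hν

end Couplings

section BoundedRange

open Bornology

lemma isBounded_range_dist {A M : Type*} [PseudoMetricSpace M] {f g : A → M}
    (hf : IsBounded (Set.range f)) (hg : IsBounded (Set.range g)) :
    IsBounded (Set.range fun a ↦ dist (f a) (g a)) := by
  refine (LipschitzWith.dist.isBounded_image (hf.prod hg)).subset ?_
  rintro _ ⟨a, rfl⟩
  exact ⟨(f a, g a), ⟨⟨a, rfl⟩, ⟨a, rfl⟩⟩, rfl⟩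

lemma isBounded_range_prodMk {A M N : Type*} [PseudoMetricSpace M] [PseudoMetricSpace N]
    {f : A → M} {g : A → N} (hf : IsBounded (Set.range f)) (hg : IsBounded (Set.range g)) :
    IsBounded (Set.range fun a ↦ (f a, g a)) := by
  refine (hf.prod hg).subset ?_
  rintro _ ⟨a, rfl⟩
  exact ⟨⟨a, rfl⟩, ⟨a, rfl⟩⟩

lemma isBounded_range_continuous_comp {A M N : Type*} [PseudoMetricSpace M] [ProperSpace M]
    [PseudoMetricSpace N] {F : M → N} {f : A → M} (hF : Continuous F)
    (hf : IsBounded (Set.range f)) : IsBounded (Set.range fun a ↦ F (f a)) := by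
  refine (hf.isCompact_closure.image hF).isBounded.subset ?_
  rintro _ ⟨a, rfl⟩
  exact Set.mem_image_of_mem F (subset_closure ⟨a, rfl⟩)

end BoundedRange

lemma continuous_integral_prod_of_isBounded_range {A B : Type*}
    [MeasurableSpace A] [TopologicalSpace A] [SecondCountableTopology A]
    [TopologicalSpace.PseudoMetrizableSpace A] [OpensMeasurableSpace A]
    [MeasurableSpace B] [TopologicalSpace B] [SecondCountableTopology B]
    [TopologicalSpace.PseudoMetrizableSpace B] [OpensMeasurableSpace B]
    {f : A × B → ℝ} (hf : Continuous f) (hfb : Bornology.IsBounded (Set.range f)) :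
    Continuous fun μ : ProbabilityMeasure A × ProbabilityMeasure B ↦
      ∫ w, f w ∂((μ.1 : Measure A).prod (μ.2 : Measure B)) :=
  let g : BoundedContinuousFunction (A × B) ℝ := ⟨⟨f, hf⟩, Metric.isBounded_range_iff.1 hfb⟩
  (ProbabilityMeasure.continuous_integral_boundedContinuousFunction g).comp
    ProbabilityMeasure.continuous_prod

section Distortion

variable {X Y Ψ Ω : Type*} [PseudoMetricSpace Ψ] [PseudoMetricSpace Ω]

/-- The fused distortion of the pairs `(x, y)` and `(x', y')`: the bracket in
`E_{α,β,q,p}(g_X, g_Y, μ)`, before it is raised to the power `p`. -/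
noncomputable def fngwDistortion (α β q : ℝ)
    (ψX : X → Ψ) (φX : X × X → ℝ) (ωX : X × X → Ω)
    (ψY : Y → Ψ) (φY : Y × Y → ℝ) (ωY : Y × Y → Ω) (w : (X × Y) × (X × Y)) : ℝ :=
  (1 - α - β) * dist (ψX w.1.1) (ψY w.1.2) ^ q
    + α * dist (ωX (w.1.1, w.2.1)) (ωY (w.1.2, w.2.2)) ^ q
    + β * |φX (w.1.1, w.2.1) - φY (w.1.2, w.2.2)| ^ q

variable {α β q : ℝ} {ψX : X → Ψ} {φX : X × X → ℝ} {ωX : X × X → Ω}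
  {ψY : Y → Ψ} {φY : Y × Y → ℝ} {ωY : Y × Y → Ω}

lemma continuous_fngwDistortion [TopologicalSpace X] [TopologicalSpace Y] (hq : 0 ≤ q)
    (hψX : Continuous ψX) (hφX : Continuous φX) (hωX : Continuous ωX)
    (hψY : Continuous ψY) (hφY : Continuous φY) (hωY : Continuous ωY) :
    Continuous (fngwDistortion α β q ψX φX ωX ψY φY ωY) := by
  unfold fngwDistortion
  fun_prop (disch := exact fun _ ↦ .inr hq)

lemma isBounded_range_fngwDistortion (hq : 0 ≤ q)
    (hψX : Bornology.IsBounded (Set.range ψX)) (hφX : Bornology.IsBounded (Set.range φX))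
    (hωX : Bornology.IsBounded (Set.range ωX)) (hψY : Bornology.IsBounded (Set.range ψY))
    (hφY : Bornology.IsBounded (Set.range φY)) (hωY : Bornology.IsBounded (Set.range ωY)) :
    Bornology.IsBounded (Set.range (fngwDistortion α β q ψX φX ωX ψY φY ωY)) := by
  have hcombination : Continuous fun t : ℝ × ℝ × ℝ ↦
      (1 - α - β) * t.1 ^ q + α * t.2.1 ^ q + β * t.2.2 ^ q := by
    fun_prop (disch := exact fun _ ↦ .inr hq)
  have hψ : Bornology.IsBounded (Set.range fun w : (X × Y) × (X × Y) ↦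
      dist (ψX w.1.1) (ψY w.1.2)) :=
    isBounded_range_dist (hψX.subset (Set.range_comp_subset_range _ ψX))
      (hψY.subset (Set.range_comp_subset_range _ ψY))
  have hω : Bornology.IsBounded (Set.range fun w : (X × Y) × (X × Y) ↦
      dist (ωX (w.1.1, w.2.1)) (ωY (w.1.2, w.2.2))) :=
    isBounded_range_dist (hωX.subset (Set.range_comp_subset_range _ ωX))
      (hωY.subset (Set.range_comp_subset_range _ ωY))
  have hφ : Bornology.IsBounded (Set.range fun w : (X × Y) × (X × Y) ↦
      |φX (w.1.1, w.2.1) - φY (w.1.2, w.2.2)|) :=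
    isBounded_range_dist (hφX.subset (Set.range_comp_subset_range _ φX))
      (hφY.subset (Set.range_comp_subset_range _ φY))
  have hdistortion := isBounded_range_continuous_comp hcombination
    (isBounded_range_prodMk hψ (isBounded_range_prodMk hω hφ))
  exact hdistortion

end Distortion

lemma continuous_fngwCost {X Y Ψ Ω : Type*}
    [MeasurableSpace X] [TopologicalSpace X] [SecondCountableTopology X]
    [TopologicalSpace.PseudoMetrizableSpace X] [OpensMeasurableSpace X]
    [MeasurableSpace Y] [TopologicalSpace Y] [SecondCountableTopology Y]
    [TopologicalSpace.PseudoMetrizableSpace Y] [OpensMeasurableSpace Y]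
    [MetricSpace Ψ] [MetricSpace Ω]
    {ψX : X → Ψ} {φX : X × X → ℝ} {ωX : X × X → Ω}
    {ψY : Y → Ψ} {φY : Y × Y → ℝ} {ωY : Y × Y → Ω}
    (hψX : Continuous ψX) (hψXb : Bornology.IsBounded (Set.range ψX))
    (hφX : Continuous φX) (hφXb : Bornology.IsBounded (Set.range φX))
    (hωX : Continuous ωX) (hωXb : Bornology.IsBounded (Set.range ωX))
    (hψY : Continuous ψY) (hψYb : Bornology.IsBounded (Set.range ψY))
    (hφY : Continuous φY) (hφYb : Bornology.IsBounded (Set.range φY))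
    (hωY : Continuous ωY) (hωYb : Bornology.IsBounded (Set.range ωY))
    {p q : ℝ} (hp : 0 ≤ p) (hq : 0 ≤ q) (α β : ℝ) :
    Continuous fun μ : ProbabilityMeasure (X × Y) ↦
      fngwCost α β q p ψX φX ωX ψY φY ωY (μ : Measure (X × Y)) := by
  have hpow : Continuous fun t : ℝ ↦ t ^ p := Real.continuous_rpow_const hp
  have hcont : Continuous fun w ↦ fngwDistortion α β q ψX φX ωX ψY φY ωY w ^ p :=
    hpow.comp (continuous_fngwDistortion hq hψX hφX hωX hψY hφY hωY)
  have hbdd : Bornology.IsBounded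
      (Set.range fun w ↦ fngwDistortion α β q ψX φX ωX ψY φY ωY w ^ p) :=
    isBounded_range_continuous_comp hpow
      (isBounded_range_fngwDistortion hq hψXb hφXb hωXb hψYb hφYb hωYb)
  have hint : Continuous fun μ : ProbabilityMeasure (X × Y) ↦
      ∫ w, fngwDistortion α β q ψX φX ωX ψY φY ωY w ^ p
        ∂((μ : Measure (X × Y)).prod (μ : Measure (X × Y))) :=
    (continuous_integral_prod_of_isBounded_range hcont hbdd).comp
      (continuous_id.prodMk continuous_id)
  exact (Real.continuous_rpow_const (one_div_nonneg.2 hp)).comp hint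

theorem fngw_exists_optimal_coupling_general {X Y Ψ Ω : Type*}
    [MeasurableSpace X] [TopologicalSpace X] [SecondCountableTopology X]
    [TopologicalSpace.MetrizableSpace X] [BorelSpace X]
    [MeasurableSpace Y] [TopologicalSpace Y] [SecondCountableTopology Y]
    [TopologicalSpace.MetrizableSpace Y] [BorelSpace Y]
    [MetricSpace Ψ] [MetricSpace Ω]
    {ψX : X → Ψ} {φX : X × X → ℝ} {ωX : X × X → Ω}
    {ψY : Y → Ψ} {φY : Y × Y → ℝ} {ωY : Y × Y → Ω}
    {μX : Measure X} {μY : Measure Y}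
    [IsProbabilityMeasure μX] [IsProbabilityMeasure μY]
    (hμX : IsTightMeasureSet {μX}) (hμY : IsTightMeasureSet {μY})
    (hψX : Continuous ψX) (hψXb : Bornology.IsBounded (Set.range ψX))
    (hφX : Continuous φX) (hφXb : Bornology.IsBounded (Set.range φX))
    (hωX : Continuous ωX) (hωXb : Bornology.IsBounded (Set.range ωX))
    (hψY : Continuous ψY) (hψYb : Bornology.IsBounded (Set.range ψY))
    (hφY : Continuous φY) (hφYb : Bornology.IsBounded (Set.range φY))
    (hωY : Continuous ωY) (hωYb : Bornology.IsBounded (Set.range ωY))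
    {p q : ℝ} (hp : 0 < p) (hq : 0 < q) (α β : ℝ) :
    ∃ μ ∈ couplings μX μY,
      FNGW α β q p ψX φX ωX ψY φY ωY μX μY
        = fngwCost α β q p ψX φX ωX ψY φY ωY μ := by
  have hcost := continuous_fngwCost hψX hψXb hφX hφXb hωX hωXb hψY hψYb hφY hφYb hωY hωYb
    hp.le hq.le α β
  obtain ⟨μ, hμ, hleast⟩ := exists_isLeast_image_couplings hμX hμY hcost.lowerSemicontinuous
  exact ⟨μ, hμ, hleast.csInf_eq⟩

/-- **Existence of an optimal coupling for the FNGW distance.** -/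
theorem fngw_exists_optimal_coupling
    {X Y Ψ Ω : Type*}
    [MeasurableSpace X] [TopologicalSpace X] [PolishSpace X] [BorelSpace X]
    [MeasurableSpace Y] [TopologicalSpace Y] [PolishSpace Y] [BorelSpace Y]
    [MetricSpace Ψ] [MetricSpace Ω]
    (ψX : X → Ψ) (φX : X × X → ℝ) (ωX : X × X → Ω)
    (ψY : Y → Ψ) (φY : Y × Y → ℝ) (ωY : Y × Y → Ω)
    (μX : Measure X) (μY : Measure Y)
    [IsProbabilityMeasure μX] [IsProbabilityMeasure μY]
    [μX.IsOpenPosMeasure] [μY.IsOpenPosMeasure]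
    (hψX : Continuous ψX) (hψXb : Bornology.IsBounded (Set.range ψX))
    (hφX : Continuous φX) (hφXb : Bornology.IsBounded (Set.range φX))
    (hωX : Continuous ωX) (hωXb : Bornology.IsBounded (Set.range ωX))
    (hψY : Continuous ψY) (hψYb : Bornology.IsBounded (Set.range ψY))
    (hφY : Continuous φY) (hφYb : Bornology.IsBounded (Set.range φY))
    (hωY : Continuous ωY) (hωYb : Bornology.IsBounded (Set.range ωY))
    (p q α β : ℝ) (hp : 1 ≤ p) (hq : 1 ≤ q)
    (hα : α ∈ Set.Icc (0 : ℝ) 1) (hβ : β ∈ Set.Icc (0 : ℝ) 1) :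
    ∃ μ ∈ couplings μX μY,
      FNGW α β q p ψX φX ωX ψY φY ωY μX μY
        = fngwCost α β q p ψX φX ωX ψY φY ωY μ := by
  exact fngw_exists_optimal_coupling_general isTightMeasureSet_singleton
    isTightMeasureSet_singleton hψX hψXb hφX hφXb hωX hωXb hψY hψYb hφY hφYb hωY hωYb
    (zero_lt_one.trans_le hp) (zero_lt_one.trans_le hq) α β
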